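/- Let X be a metric space, E ⊆ X a non-empty subset, f : E → ℝ a bounded Lipschitz function, and ε > 0. Then there exists a Lipschitz extension f̄ : X → ℝ of f such that Lip(f̄) ≤ Lip(f) + ε, lip_a(f̄)(x) = lip_a(f)(x) for every x ∈ E, and inf_E f ≤ f̄(y) ≤ sup_E f for every y ∈ X. -/

import Mathlib

open Metric Set Filter ENNReal MeasureTheory

/-- `lipOn f E` is the Lipschitz constant (valued in `ℝ≥0∞`) of `f : X → ℝ` restricted
to the set `E ⊆ X`, namely `Lip(f; E)`. -/
noncomputable def lipOn {X : Type*} [MetricSpace X] (f : X → ℝ) (E : Set X) : ℝ≥0∞ :=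
  ⨆ (x : E) (y : E), edist (f x) (f y) / edist (x : X) (y : X)

/-- `asympSlope f x` is the asymptotic slope `lip_a(f)(x) = inf_{r>0} Lip(f; B_r(x))`. -/
noncomputable def asympSlope {X : Type*} [MetricSpace X] (f : X → ℝ) (x : X) : ℝ≥0∞ :=
  ⨅ (r : ℝ) (_ : 0 < r), lipOn f (Metric.ball x r)

/-- `asympSlopeOn f E x` is the asymptotic slope of `f` at `x ∈ E` computed within `E`,
i.e. `inf_{r>0} Lip(f; B_r(x) ∩ E)`. -/
noncomputable def asympSlopeOn {X : Type*} [MetricSpace X] (f : X → ℝ) (E : Set X) (x : X) :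
    ℝ≥0∞ :=
  ⨅ (r : ℝ) (_ : 0 < r), lipOn f (Metric.ball x r ∩ E)

/-!
Put `K = L + ε`, with `L = Lip(f; E)`. The extension is the upper envelope over `y ∈ E` of peaks
`f y - φ_y (d(z, y))`, where `φ_y` is the supremum over the scales `r` of the hinges with slope
`Lip(f; B_r(y) ∩ E) + min(r, ε)` and starting point `delay r`.

* At a point `x ∈ E` the hinge of scale `r = 2 d(x, y)` already keeps the peak at `y` below `f x`:
  its extra slope `min(r, ε)` makes up for the late start and leaves a margin `K * delay r`.
* At distance less than `delay r` from `y` only hinges of scales below `r` are active, so that near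
  `x ∈ E` the peaks based near `x` have slope at most `Lip(f; B_{2r}(x) ∩ E) + r`. By the margin,
  the peaks based away from `x` stay below the one at `x` in a neighbourhood of `x`, so the
  envelope has the same local Lipschitz bound.

The peaks never exceed `sup_E f`; truncation from below gives the other bound and does not increase
any Lipschitz constant.
-/

open scoped NNReal

section LipschitzConstant

variable {X : Type*} [MetricSpace X] {f g : X → ℝ} {E S : Set X} {K : ℝ≥0}

lemma lipOn_le_coe_iff : lipOn f S ≤ K ↔ LipschitzOnWith K f S := by
  simp only [lipOn, iSup_le_iff, Subtype.forall, LipschitzOnWith]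
  refine forall₄_congr fun x _ y _ => ?_
  rcases eq_or_ne x y with rfl | hxy
  · simp only [edist_self, ENNReal.zero_div, zero_le]
  · exact ENNReal.div_le_iff (edist_pos.2 hxy).ne' (edist_ne_top x y)

lemma lipOn_ne_top (hf : LipschitzOnWith K f S) : lipOn f S ≠ ⊤ :=
  ne_top_of_le_ne_top coe_ne_top (lipOn_le_coe_iff.2 hf)

lemma toNNReal_lipOn_le (hf : LipschitzOnWith K f S) : (lipOn f S).toNNReal ≤ K :=
  ENNReal.toNNReal_mono coe_ne_top (lipOn_le_coe_iff.2 hf)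

lemma lipschitzOnWith_toNNReal_lipOn (hf : lipOn f S ≠ ⊤) :
    LipschitzOnWith (lipOn f S).toNNReal f S :=
  lipOn_le_coe_iff.1 (coe_toNNReal hf).ge

lemma lipOn_mono {T : Set X} (h : S ⊆ T) : lipOn f S ≤ lipOn f T :=
  iSup_le fun x => iSup_le fun y => le_iSup₂_of_le ⟨x, h x.2⟩ ⟨y, h y.2⟩ le_rfl

lemma lipOn_congr (h : EqOn f g S) : lipOn f S = lipOn g S :=
  iSup_congr fun x => iSup_congr fun y => by rw [h x.2, h y.2]

lemma lipOn_comp_le {φ : ℝ → ℝ} (hφ : LipschitzWith 1 φ) : lipOn (φ ∘ g) S ≤ lipOn g S :=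
  iSup₂_mono fun x y => by
    gcongr
    simpa only [ENNReal.coe_one, one_mul, Function.comp_apply] using hφ (g x) (g y)

lemma asympSlope_comp_le {φ : ℝ → ℝ} (hφ : LipschitzWith 1 φ) (x : X) :
    asympSlope (φ ∘ g) x ≤ asympSlope g x :=
  iInf₂_mono fun _ _ => lipOn_comp_le hφ

lemma asympSlopeOn_le_asympSlope (h : EqOn g f E) (x : X) :
    asympSlopeOn f E x ≤ asympSlope g x :=
  iInf₂_mono fun _ _ =>
    (lipOn_congr fun _ hz => (h hz.2).symm).trans_le (lipOn_mono inter_subset_left)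

end LipschitzConstant

lemma lipschitzOnWith_ciSup {ι X : Type*} [PseudoMetricSpace X] {F : ι → X → ℝ} {M : ℝ≥0}
    {S : Set X} (hbdd : ∀ x ∈ S, BddAbove (range (F · x)))
    (hF : ∀ i, ∀ x ∈ S, ∃ j, F i x ≤ F j x ∧ LipschitzOnWith M (F j) S) :
    LipschitzOnWith M (fun x => ⨆ i, F i x) S := by
  refine .of_le_add_mul M fun x hx y hy => ?_
  rcases isEmpty_or_nonempty ι
  · simp only [Real.iSup_of_isEmpty]
    positivity
  refine ciSup_le fun i => ?_
  obtain ⟨j, hij, hj⟩ := hF i x hx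
  calc F i x ≤ F j x := hij
    _ ≤ F j y + M * dist x y := hj.le_add_mul hx hy
    _ ≤ (⨆ i, F i y) + M * dist x y := by gcongr; exact le_ciSup (hbdd y hy) j

lemma lipschitzOnWith_sub_comp_dist {X : Type*} [PseudoMetricSpace X] {φ : ℝ → ℝ} {M : ℝ≥0}
    {T : Set ℝ} (hφ : LipschitzOnWith M φ T) (a : ℝ) (y : X) :
    LipschitzOnWith M (fun z => a - φ (dist z y)) ((dist · y) ⁻¹' T) := by
  refine .of_dist_le_mul fun z hz w hw => ?_
  calc dist (a - φ (dist z y)) (a - φ (dist w y))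
      = dist (φ (dist z y)) (φ (dist w y)) := dist_sub_left _ _ _
    _ ≤ M * dist (dist z y) (dist w y) := hφ.dist_le_mul _ hz _ hw
    _ ≤ M * dist z w := by gcongr; exact dist_dist_dist_le_left z w y

lemma exists_lipschitzWith_one_truncation {s : Set ℝ} (hs : s.Nonempty) :
    ∃ φ : ℝ → ℝ, LipschitzWith 1 φ ∧ EqOn φ id s ∧ ∀ t, (∀ m ∈ lowerBounds s, m ≤ φ t) ∧
      ∀ M ∈ upperBounds s, t ≤ M → φ t ≤ M := by
  by_cases hb : BddBelow s
  · refine ⟨fun t => max (sInf s) t, LipschitzWith.id.const_max _,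
      fun t ht => max_eq_right (csInf_le hb ht), fun t => ⟨fun m hm => ?_, fun M hM htM => ?_⟩⟩
    · exact le_max_of_le_left (le_csInf hs hm)
    · exact max_le (csInf_le_of_le hb hs.some_mem (hM hs.some_mem)) htM
  · exact ⟨id, LipschitzWith.id, eqOn_refl _ _,
      fun t => ⟨fun m hm => absurd ⟨m, hm⟩ hb, fun _ _ htM => htM⟩⟩

section Hinges

variable {ι : Type*} {s c : ι → ℝ≥0} {K M : ℝ≥0} {T : Set ℝ}

/-- The supremum of the hinge functions `t ↦ s i * (t - c i)⁺`, each of which vanishes up to `c i`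
and then grows with slope `s i`. It is a junk value where the supremum is infinite, which does not
happen when the slopes are bounded. -/
noncomputable def hingeSup (s c : ι → ℝ≥0) (t : ℝ) : ℝ :=
  ⨆ i, s i * max (t - c i) 0

lemma bddAbove_range_hinge (hs : ∀ i, s i ≤ K) (t : ℝ) :
    BddAbove (range fun i => (s i : ℝ) * max (t - c i) 0) := by
  refine ⟨K * max t 0, forall_mem_range.2 fun i => ?_⟩
  gcongr
  · exact hs i
  · exact sub_le_self t (c i).2

lemma hingeSup_nonneg (s c : ι → ℝ≥0) (t : ℝ) : 0 ≤ hingeSup s c t :=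
  Real.iSup_nonneg fun _ => by positivity

lemma hingeSup_zero (s c : ι → ℝ≥0) : hingeSup s c 0 = 0 := by
  simp [hingeSup]

lemma mul_sub_le_hingeSup (hs : ∀ i, s i ≤ K) (t : ℝ) (i : ι) :
    s i * (t - c i) ≤ hingeSup s c t :=
  (mul_le_mul_of_nonneg_left (le_max_left _ _) (s i).2).trans
    (le_ciSup (bddAbove_range_hinge hs t) i)

lemma lipschitzOnWith_hinge {a b : ℝ≥0} (h : ∀ t ∈ T, b < t → a ≤ M) :
    LipschitzOnWith M (fun t : ℝ => (a : ℝ) * max (t - b) 0) T := by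
  refine .of_le_add_mul M fun t ht u _ => ?_
  rcases le_or_gt t b with htb | hbt
  · rw [max_eq_right (sub_nonpos.2 htb), mul_zero]
    positivity
  have hmax : max (t - b) 0 ≤ max (u - b) 0 + dist t u := by
    rw [Real.dist_eq]
    refine max_le ?_ (by positivity)
    linarith [le_max_left (u - b) 0, le_abs_self (t - u)]
  calc (a : ℝ) * max (t - b) 0 ≤ a * (max (u - b) 0 + dist t u) := by gcongr
    _ = a * max (u - b) 0 + a * dist t u := mul_add _ _ _
    _ ≤ a * max (u - b) 0 + M * dist t u := by gcongr; exact h t ht hbt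

lemma lipschitzOnWith_hingeSup (hs : ∀ i, s i ≤ K) (hM : ∀ i, ∀ t ∈ T, c i < t → s i ≤ M) :
    LipschitzOnWith M (hingeSup s c) T :=
  lipschitzOnWith_ciSup (fun t _ => bddAbove_range_hinge hs t)
    fun i _ _ => ⟨i, le_rfl, lipschitzOnWith_hinge (hM i)⟩

end Hinges

section Delay

variable {ε K r r' : ℝ≥0}

/-- The distance at which the hinge of scale `r` starts to grow. It is chosen such that
`4 * K * delay ε K r = min r ε * r`. -/
noncomputable def delay (ε K r : ℝ≥0) : ℝ≥0 :=
  min r ε * r / (4 * K)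

lemma four_mul_mul_delay (hK : 0 < K) (r : ℝ≥0) : 4 * K * delay ε K r = min r ε * r :=
  mul_div_cancel₀ _ (by positivity)

lemma delay_mono (h : r ≤ r') : delay ε K r ≤ delay ε K r' := by
  unfold delay
  gcongr

lemma delay_pos (hε : 0 < ε) (hK : 0 < K) (hr : 0 < r) : 0 < delay ε K r := by
  have : 0 < min r ε := lt_min hr hε
  unfold delay
  positivity

lemma delay_le_self (hεK : ε ≤ K) (r : ℝ≥0) : delay ε K r ≤ r := by
  refine div_le_of_le_mul₀ (by positivity) (by positivity) ?_
  calc min r ε * r ≤ K * r := by gcongr; exact (min_le_right _ _).trans hεK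
    _ ≤ r * (4 * K) := by
      rw [mul_comm]
      gcongr
      exact le_mul_of_one_le_left (by positivity) (by norm_num)

end Delay

section Extension

variable {X : Type*} [MetricSpace X] {f : X → ℝ} {E : Set X} {ε K L : ℝ≥0} {x y z : X}

/-- The Lipschitz constant of `f` on `B_r(y) ∩ E`, as a real number; it has the junk value `0` if
that constant is infinite. -/
noncomputable def ballLip (f : X → ℝ) (E : Set X) (y : X) (r : ℝ≥0) : ℝ≥0 :=
  (lipOn f (ball y r ∩ E)).toNNReal

lemma lipOn_ball_ne_top (hf : LipschitzOnWith L f E) (y : X) (r : ℝ≥0) :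
    lipOn f (ball y r ∩ E) ≠ ⊤ :=
  lipOn_ne_top (hf.mono inter_subset_right)

lemma lipschitzOnWith_ballLip (hf : LipschitzOnWith L f E) (y : X) (r : ℝ≥0) :
    LipschitzOnWith (ballLip f E y r) f (ball y r ∩ E) :=
  lipschitzOnWith_toNNReal_lipOn (lipOn_ball_ne_top hf y r)

lemma ballLip_le (hf : LipschitzOnWith L f E) (y : X) (r : ℝ≥0) : ballLip f E y r ≤ L :=
  toNNReal_lipOn_le (hf.mono inter_subset_right)

lemma ballLip_mono (hf : LipschitzOnWith L f E) {r R : ℝ≥0} (h : ball y r ⊆ ball x R) :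
    ballLip f E y r ≤ ballLip f E x R :=
  toNNReal_lipOn_le ((lipschitzOnWith_ballLip hf x R).mono (inter_subset_inter_left E h))

lemma ballLip_add_le (hf : LipschitzOnWith L f E) (hK : L + ε ≤ K) (y : X) (r : ℝ≥0) :
    ballLip f E y r + min r ε ≤ K :=
  (add_le_add (ballLip_le hf y r) (min_le_right r ε)).trans hK

/-- The peak `z ↦ f y - φ_y (d(z, y))` at `y`, where `φ_y` is the supremum over all scales `r` of
the hinges of slope `Lip(f; B_r(y) ∩ E) + min(r, ε)` that start at `delay ε K r`. -/
noncomputable def peak (f : X → ℝ) (E : Set X) (ε K : ℝ≥0) (y z : X) : ℝ :=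
  f y - hingeSup (fun r => ballLip f E y r + min r ε) (delay ε K) (dist z y)

lemma peak_self (f : X → ℝ) (E : Set X) (ε K : ℝ≥0) (y : X) : peak f E ε K y y = f y := by
  rw [peak, dist_self, hingeSup_zero, sub_zero]

lemma peak_le_apply_base (f : X → ℝ) (E : Set X) (ε K : ℝ≥0) (y z : X) :
    peak f E ε K y z ≤ f y :=
  sub_le_self _ (hingeSup_nonneg _ _ _)

lemma lipschitzWith_peak (hf : LipschitzOnWith L f E) (hK : L + ε ≤ K) (y : X) :
    LipschitzWith K (peak f E ε K y) :=
  lipschitzOnWith_univ.1 <| lipschitzOnWith_sub_comp_dist (T := univ)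
    (lipschitzOnWith_hingeSup (ballLip_add_le hf hK y) fun r _ _ _ => ballLip_add_le hf hK y r) _ y

lemma lipschitzOnWith_peak (hf : LipschitzOnWith L f E) (hK : L + ε ≤ K) {R : ℝ≥0}
    (hyx : dist y x < delay ε K R / 2) :
    LipschitzOnWith (ballLip f E x (2 * R) + R) (peak f E ε K y) (ball x (delay ε K R / 2)) := by
  have hρ : (delay ε K R : ℝ) ≤ R := delay_le_self (le_of_add_le_right hK) R
  have hslope : ∀ r : ℝ≥0, ∀ t ∈ Iio (delay ε K R : ℝ), delay ε K r < t →
      ballLip f E y r + min r ε ≤ ballLip f E x (2 * R) + R := by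
    intro r t ht hrt
    have hrR : r < R := by
      by_contra! hRr
      exact (hrt.trans ht).not_ge (delay_mono hRr)
    gcongr
    · refine ballLip_mono hf (ball_subset_ball' ?_)
      have : (r : ℝ) < R := hrR
      push_cast
      linarith [R.2]
    · exact (min_le_left r ε).trans hrR.le
  refine (lipschitzOnWith_sub_comp_dist
    (lipschitzOnWith_hingeSup (ballLip_add_le hf hK y) hslope) (f y) y).mono fun z hz => ?_
  calc dist z y ≤ dist z x + dist y x := dist_triangle_right z y x
    _ < delay ε K R := by linarith [mem_ball.1 hz]

lemma peak_add_le (hf : LipschitzOnWith L f E) (hε : 0 < ε) (hK : L + ε ≤ K) (hx : x ∈ E)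
    (hy : y ∈ E) : peak f E ε K y x + K * delay ε K (2 * nndist x y) ≤ f x := by
  rcases eq_or_ne x y with rfl | hxy
  · simp [peak_self, delay]
  set r := 2 * nndist x y with hr
  have hrd : (r : ℝ) = 2 * dist x y := by rw [hr, NNReal.coe_mul, coe_nndist, NNReal.coe_ofNat]
  have hd : 0 < dist x y := dist_pos.2 hxy
  have hfy : f y ≤ f x + ballLip f E y r * dist x y := by
    rw [dist_comm]
    refine (lipschitzOnWith_ballLip hf y r).le_add_mul ⟨mem_ball_self ?_, hy⟩ ⟨?_, hx⟩
    · linarith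
    · rw [mem_ball]
      linarith
  have hhinge := mul_sub_le_hingeSup (c := delay ε K) (ballLip_add_le hf hK y) (dist x y) r
  have hloss : (ballLip f E y r + min r ε : ℝ≥0) * (delay ε K r : ℝ) ≤ K * delay ε K r := by
    gcongr
    exact ballLip_add_le hf hK y r
  have hdelay : 4 * K * (delay ε K r : ℝ) = (min r ε : ℝ≥0) * r :=
    mod_cast four_mul_mul_delay (hε.trans_le (le_of_add_le_right hK)) r
  rw [hrd] at hdelay
  rw [NNReal.coe_add] at hhinge hloss
  unfold peak
  linarith

lemma peak_le (hf : LipschitzOnWith L f E) (hε : 0 < ε) (hK : L + ε ≤ K) (hx : x ∈ E)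
    (hy : y ∈ E) : peak f E ε K y x ≤ f x :=
  (le_add_of_nonneg_right (by positivity)).trans (peak_add_le hf hε hK hx hy)

lemma peak_le_peak_of_far (hf : LipschitzOnWith L f E) (hε : 0 < ε) (hK : L + ε ≤ K) (hx : x ∈ E)
    (hy : y ∈ E) {ρ : ℝ≥0} (hyx : (ρ / 2 : ℝ) ≤ dist y x) (hz : dist z x ≤ delay ε K ρ / 2) :
    peak f E ε K y z ≤ peak f E ε K x z := by
  have hρ : ρ ≤ 2 * nndist x y := by
    rw [← NNReal.coe_le_coe, NNReal.coe_mul, coe_nndist, NNReal.coe_ofNat, dist_comm]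
    linarith
  have hmargin : (K : ℝ) * dist z x + K * dist z x ≤ K * delay ε K (2 * nndist x y) :=
    calc (K : ℝ) * dist z x + K * dist z x = K * (2 * dist z x) := by ring
      _ ≤ K * delay ε K ρ := by gcongr; linarith
      _ ≤ K * delay ε K (2 * nndist x y) := by gcongr; exact delay_mono hρ
  calc peak f E ε K y z ≤ peak f E ε K y x + K * dist z x :=
        (lipschitzWith_peak hf hK y).le_add_mul z x
    _ ≤ f x - K * dist z x := by linarith [peak_add_le hf hε hK hx hy]
    _ = peak f E ε K x x - K * dist x z := by rw [peak_self, dist_comm]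
    _ ≤ peak f E ε K x z := sub_le_iff_le_add.2 ((lipschitzWith_peak hf hK x).le_add_mul x z)

/-- The upper envelope of the peaks of `f` at the points of `E`: the slope-preserving extension of
`f`, before it is truncated from below. -/
noncomputable def peakEnvelope (f : X → ℝ) (E : Set X) (ε K : ℝ≥0) (z : X) : ℝ :=
  ⨆ y : E, peak f E ε K y z

lemma peakEnvelope_le (hE : E.Nonempty) {M : ℝ} (hM : M ∈ upperBounds (f '' E)) (z : X) :
    peakEnvelope f E ε K z ≤ M :=
  have := hE.to_subtype
  ciSup_le fun y => (peak_le_apply_base f E ε K y z).trans (hM (mem_image_of_mem f y.2))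

lemma bddAbove_range_peak (hf : LipschitzOnWith L f E) (hε : 0 < ε) (hK : L + ε ≤ K) (z : X) :
    BddAbove (range fun y : E => peak f E ε K y z) := by
  rcases E.eq_empty_or_nonempty with rfl | ⟨x, hx⟩
  · simp only [range_eq_empty, bddAbove_empty]
  refine ⟨f x + K * dist z x, forall_mem_range.2 fun y => ?_⟩
  calc peak f E ε K y z ≤ peak f E ε K y x + K * dist z x :=
        (lipschitzWith_peak hf hK _).le_add_mul z x
    _ ≤ f x + K * dist z x := by gcongr; exact peak_le hf hε hK hx y.2

lemma peakEnvelope_eqOn (hf : LipschitzOnWith L f E) (hε : 0 < ε) (hK : L + ε ≤ K) :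
    EqOn (peakEnvelope f E ε K) f E := fun x hx =>
  have : Nonempty E := ⟨x, hx⟩
  le_antisymm (ciSup_le fun y => peak_le hf hε hK hx y.2)
    ((peak_self f E ε K x).ge.trans (le_ciSup (bddAbove_range_peak hf hε hK x) ⟨x, hx⟩))

lemma lipschitzWith_peakEnvelope (hf : LipschitzOnWith L f E) (hε : 0 < ε) (hK : L + ε ≤ K) :
    LipschitzWith K (peakEnvelope f E ε K) :=
  lipschitzOnWith_univ.1 <| lipschitzOnWith_ciSup (fun z _ => bddAbove_range_peak hf hε hK z)
    fun y _ _ => ⟨y, le_rfl, (lipschitzWith_peak hf hK y).lipschitzOnWith⟩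

lemma lipschitzOnWith_peakEnvelope (hf : LipschitzOnWith L f E) (hε : 0 < ε) (hK : L + ε ≤ K)
    (hx : x ∈ E) {R : ℝ≥0} (hR : 0 < R) :
    LipschitzOnWith (ballLip f E x (2 * R) + R) (peakEnvelope f E ε K)
      (ball x (delay ε K (delay ε K R) / 2)) := by
  have hεK : ε ≤ K := le_of_add_le_right hK
  have hρ : 0 < delay ε K R := delay_pos hε (hε.trans_le hεK) hR
  have hnear : ∀ y, dist y x < delay ε K R / 2 → LipschitzOnWith (ballLip f E x (2 * R) + R)
      (peak f E ε K y) (ball x (delay ε K (delay ε K R) / 2)) := fun y hyx =>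
    (lipschitzOnWith_peak hf hK hyx).mono <| ball_subset_ball <| by
      gcongr
      exact delay_le_self hεK _
  refine lipschitzOnWith_ciSup (fun z _ => bddAbove_range_peak hf hε hK z) fun y z hz => ?_
  rcases lt_or_ge (dist (y : X) x) (delay ε K R / 2) with hyx | hyx
  · exact ⟨y, le_rfl, hnear y hyx⟩
  · refine ⟨⟨x, hx⟩, peak_le_peak_of_far hf hε hK hx y.2 hyx (mem_ball.1 hz).le, hnear x ?_⟩
    rw [dist_self]
    positivity

lemma asympSlope_peakEnvelope_le (hf : LipschitzOnWith L f E) (hε : 0 < ε) (hK : L + ε ≤ K)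
    (hx : x ∈ E) : asympSlope (peakEnvelope f E ε K) x ≤ asympSlopeOn f E x := by
  refine le_iInf₂ fun r hr => ENNReal.le_of_forall_pos_le_add fun δ hδ _ => ?_
  lift r to ℝ≥0 using hr.le
  set R := min (r / 2) δ
  have hR : 0 < R := lt_min (half_pos hr) hδ
  have hσ : 0 < delay ε K (delay ε K R) := by
    have hK' : 0 < K := hε.trans_le (le_of_add_le_right hK)
    exact delay_pos hε hK' (delay_pos hε hK' hR)
  have hRr : 2 * R ≤ r := by
    calc 2 * R ≤ 2 * (r / 2) := by gcongr; exact min_le_left _ _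
      _ = r := mul_div_cancel₀ r two_ne_zero
  calc asympSlope (peakEnvelope f E ε K) x
      ≤ lipOn (peakEnvelope f E ε K) (ball x (delay ε K (delay ε K R) / 2)) :=
        iInf₂_le _ (by positivity)
    _ ≤ (ballLip f E x (2 * R) + R : ℝ≥0) :=
        lipOn_le_coe_iff.2 (lipschitzOnWith_peakEnvelope hf hε hK hx hR)
    _ ≤ (ballLip f E x r + δ : ℝ≥0) := by
        gcongr
        · exact ballLip_mono hf (ball_subset_ball hRr)
        · exact min_le_right _ _
    _ = lipOn f (ball x r ∩ E) + δ := by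
        rw [ENNReal.coe_add, ballLip, coe_toNNReal (lipOn_ball_ne_top hf x r)]

end Extension

theorem lipschitz_extension_asympSlope_bounded_general {X : Type*} [MetricSpace X] (E : Set X)
    (hE : E.Nonempty) (f : X → ℝ) (hf : ∃ K, LipschitzOnWith K f E) (ε : ℝ) (hε : 0 < ε) :
    ∃ g : X → ℝ, (∃ K, LipschitzWith K g) ∧ (∀ x ∈ E, g x = f x) ∧
      lipOn g Set.univ ≤ lipOn f E + ENNReal.ofReal ε ∧
      (∀ x ∈ E, asympSlope g x = asympSlopeOn f E x) ∧
      ∀ y : X, (∀ m ∈ lowerBounds (f '' E), m ≤ g y) ∧ ∀ M ∈ upperBounds (f '' E), g y ≤ M := by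
  obtain ⟨K₀, hK₀⟩ := hf
  lift ε to ℝ≥0 using hε.le
  have hfin : lipOn f E ≠ ⊤ := lipOn_ne_top hK₀
  set L := (lipOn f E).toNNReal
  have hfL : LipschitzOnWith L f E := lipschitzOnWith_toNNReal_lipOn hfin
  obtain ⟨φ, hφ, hφf, hφbd⟩ := exists_lipschitzWith_one_truncation (hE.image f)
  set g := peakEnvelope f E ε (L + ε)
  have hgf : EqOn g f E := peakEnvelope_eqOn hfL hε le_rfl
  have hg : LipschitzWith (L + ε) g := lipschitzWith_peakEnvelope hfL hε le_rfl
  have hφgf : EqOn (φ ∘ g) f E := fun x hx => by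
    rw [Function.comp_apply, hgf hx, hφf (mem_image_of_mem f hx), id]
  refine ⟨φ ∘ g, ⟨_, hφ.comp hg⟩, hφgf, ?_, fun x hx => ?_, fun y => ?_⟩
  · calc lipOn (φ ∘ g) univ ≤ lipOn g univ := lipOn_comp_le hφ
      _ ≤ (L + ε : ℝ≥0) := lipOn_le_coe_iff.2 hg.lipschitzOnWith
      _ = lipOn f E + ENNReal.ofReal ε := by
        rw [ENNReal.coe_add, coe_toNNReal hfin, ofReal_coe_nnreal]
  · exact ((asympSlope_comp_le hφ x).trans (asympSlope_peakEnvelope_le hfL hε le_rfl hx)).antisymm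
      (asympSlopeOn_le_asympSlope hφgf x)
  · exact ⟨(hφbd _).1, fun M hM => (hφbd _).2 M hM (peakEnvelope_le hE hM y)⟩

/-- **Di Marino–Gigli–Pratelli extension theorem, bounded version.** A bounded Lipschitz
function on a non-empty set `E ⊆ X` admits a Lipschitz extension with Lipschitz constant
increased at most by `ε`, preserving the asymptotic slopes on `E`, and with values between
`inf_E f` and `sup_E f`. -/
theorem lipschitz_extension_asympSlope_bounded {X : Type*} [MetricSpace X] (E : Set X)
    (hE : E.Nonempty) (f : X → ℝ) (hf : ∃ K, LipschitzOnWith K f E)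
    (hbdd : ∃ C, ∀ x ∈ E, |f x| ≤ C) (ε : ℝ) (hε : 0 < ε) :
    ∃ g : X → ℝ, (∃ K, LipschitzWith K g) ∧ (∀ x ∈ E, g x = f x) ∧
      lipOn g Set.univ ≤ lipOn f E + ENNReal.ofReal ε ∧
      (∀ x ∈ E, asympSlope g x = asympSlopeOn f E x) ∧
      ∀ y : X, sInf (f '' E) ≤ g y ∧ g y ≤ sSup (f '' E) := by
  obtain ⟨C, hC⟩ := hbdd
  obtain ⟨g, hLip, hgf, hK, hslope, hbd⟩ :=
    lipschitz_extension_asympSlope_bounded_general E hE f hf ε hε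
  have hbelow : BddBelow (f '' E) := ⟨-C, forall_mem_image.2 fun x hx => (abs_le.1 (hC x hx)).1⟩
  have habove : BddAbove (f '' E) := ⟨C, forall_mem_image.2 fun x hx => (abs_le.1 (hC x hx)).2⟩
  exact ⟨g, hLip, hgf, hK, hslope, fun y =>
    ⟨(hbd y).1 _ fun _ => csInf_le hbelow, (hbd y).2 _ fun _ => le_csSup habove⟩⟩
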